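/- Let k ∈ {0,1}, let g^{jl} : ℝ × ℝ^{d+1} → ℝ (j,l = 1,…,d) be continuous, let F : ℝ × ℝ^{d+1} → ℝ be C¹ with F(0,0) = 0, and let f, g ∈ ℓ^{2,k}(ℤ^d). Consider the quasilinear wave equation ∂_t² u − Σ_{j,l} g^{jl}(u,u')·∂_j∂_l u = F(u,u') on ℤ^d × [0,T] with small initial data u(·,0) = εf, ∂_t u(·,0) = εg. Then there exist δ > 0 and a constant K > 0 (depending on F, the g^{jl}, f, g, and d) such that for every 0 < ε < δ the maximal existence time T*(ε) of the solution in C²([0,T]; ℓ^{2,k}(ℤ^d)) satisfies T*(ε) ≥ K·log(log(1/ε)). -/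

import Mathlib

open scoped BigOperators ENNReal NNReal
open MeasureTheory Filter

noncomputable section

/-- Kernel `φⱼ` of the discrete partial derivative on `ℤ^d`:
`φⱼ(m) = -4i/(π(4a²-1))` if `m = a·eⱼ`, and `0` otherwise. -/
def phi (d : ℕ) (j : Fin d) (m : Fin d → ℤ) : ℂ :=
  if ∀ i, i ≠ j → m i = 0 then
    (-4 * Complex.I) / ((Real.pi : ℂ) * (4 * (m j : ℂ) ^ 2 - 1))
  else 0

/-- Discrete convolution on `ℤ^d`. -/
def dconv {d : ℕ} (u v : (Fin d → ℤ) → ℂ) (k : Fin d → ℤ) : ℂ :=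
  ∑' m, u m * v (k - m)

/-- Discrete partial derivative `∂ⱼ u = u ∗ φⱼ`. -/
def pd {d : ℕ} (j : Fin d) (u : (Fin d → ℤ) → ℂ) : (Fin d → ℤ) → ℂ :=
  dconv u (phi d j)

/-- Japanese bracket `⟨m⟩ = (1+|m|²)^{1/2}`. -/
def jap {d : ℕ} (m : Fin d → ℤ) : ℝ :=
  Real.sqrt (1 + ∑ i, ((m i : ℝ)) ^ 2)

open scoped Classical in
/-- `ℓ^p` norm on `ℤ^d` (valued in `ℝ≥0∞`), `1 ≤ p ≤ ∞`. -/
def lpn {d : ℕ} (p : ℝ≥0∞) (f : (Fin d → ℤ) → ℂ) : ℝ≥0∞ :=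
  if p = ⊤ then ⨆ m, (‖f m‖₊ : ℝ≥0∞)
  else (∑' m, (‖f m‖₊ : ℝ≥0∞) ^ p.toReal) ^ (1 / p.toReal)

/-- Weighted `ℓ^{2,k}` norm: the `ℓ²` norm of `m ↦ ⟨m⟩^k f(m)`. -/
def w2 {d : ℕ} (k : ℕ) (f : (Fin d → ℤ) → ℂ) : ℝ≥0∞ :=
  lpn 2 (fun m => ((jap m ^ k : ℝ) : ℂ) * f m)

/-- Discrete Laplacian on `ℤ^d`. -/
def lap {d : ℕ} (u : (Fin d → ℤ) → ℂ) (x : Fin d → ℤ) : ℂ :=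
  ∑ j, (u (x + Pi.single j 1) + u (x - Pi.single j 1) - 2 * u x)

/-- Continuity of a curve `t ↦ f(·,t)` into `ℓ^{2,k}(ℤ^d)` on a set `S` of times. -/
def ContW {d : ℕ} (k : ℕ) (S : Set ℝ) (f : ℝ → (Fin d → ℤ) → ℂ) : Prop :=
  ∀ t ∈ S, Tendsto (fun s => w2 k (fun m => f s m - f t m))
    (nhdsWithin t S) (nhds (0 : ℝ≥0∞))

/-- `f'` is the derivative (in the `ℓ^{2,k}(ℤ^d)` norm) of the curve `t ↦ f(·,t)` on `S`. -/
def DerivW {d : ℕ} (k : ℕ) (S : Set ℝ) (f f' : ℝ → (Fin d → ℤ) → ℂ) : Prop :=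
  ∀ t ∈ S, Tendsto
    (fun s => w2 k (fun m => (s - t)⁻¹ • (f s m - f t m) - f' t m))
    (nhdsWithin t (S \ {t})) (nhds (0 : ℝ≥0∞))

/-- `u ∈ C²(S; ℓ^{2,k}(ℤ^d))`, with first and second time derivatives `u1`, `u2`. -/
structure IsC2 {d : ℕ} (k : ℕ) (S : Set ℝ) (u u1 u2 : ℝ → (Fin d → ℤ) → ℂ) : Prop where
  mem0 : ∀ t ∈ S, w2 k (u t) < ⊤
  mem1 : ∀ t ∈ S, w2 k (u1 t) < ⊤
  mem2 : ∀ t ∈ S, w2 k (u2 t) < ⊤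
  cont0 : ContW k S u
  cont1 : ContW k S u1
  cont2 : ContW k S u2
  hder1 : DerivW k S u u1
  hder2 : DerivW k S u1 u2

/-- The pointwise state `(u, u') = (u, ∂ₜu, ∂₁u, …, ∂_d u)` of a solution. -/
def state {d : ℕ} (u u1 : ℝ → (Fin d → ℤ) → ℂ) (t : ℝ) (x : Fin d → ℤ) :
    ℂ × (Fin (d + 1) → ℂ) :=
  (u t x, Fin.cons (u1 t x) fun i => pd i (u t) x)

/-- `u` (with time derivatives `u1`, `u2`) is a classical solution in
`C²(S; ℓ^{2,k}(ℤ^d))` of the quasilinear wave equation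
`∂ₜ²u - Σ_{j,l} g^{jl}(u,u')∂ⱼ∂ₗu = F(u,u')` with data `u(·,0)=f`, `∂ₜu(·,0)=g`. -/
def QLSol (d k : ℕ) (gc : Fin d → Fin d → ℂ × (Fin (d + 1) → ℂ) → ℝ)
    (F : ℂ × (Fin (d + 1) → ℂ) → ℂ) (f g : (Fin d → ℤ) → ℂ)
    (S : Set ℝ) (u u1 u2 : ℝ → (Fin d → ℤ) → ℂ) : Prop :=
  IsC2 k S u u1 u2 ∧
    (∀ t ∈ S, ∀ x,
      u2 t x - ∑ j, ∑ l, (gc j l (state u u1 t x) : ℂ) * pd j (pd l (u t)) x =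
        F (state u u1 t x)) ∧
    (∀ x, u 0 x = f x) ∧ (∀ x, u1 0 x = g x)

/-!
Multiplication by the weight identifies `ℓ^{2,k}` with `ℓ²`. For `k ≤ 1` the kernel `φⱼ` decays fast
enough for Schur's test to bound the conjugated operator `⟨m⟩^k ∂ⱼ ⟨m⟩^{-k}`, so on `ℤ^d` the wave
equation is an ordinary differential equation `u'' = N(u, u')` in a Hilbert space, without loss of
derivatives. Since the coefficients `g^{jl}` are merely continuous, `N` need not be locally
Lipschitz. However, `N` acts pointwise, so it is weakly continuous on bounded sets, and Euler
polygons have weakly convergent subsequences: Peano's theorem survives.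

Truncating the coefficients outside a ball gives `N` linear growth, hence global solutions growing
at most like `e^{Ct}`. Solutions with data of size `ε` stay in the ball, and so solve the original
equation, up to a time of order `log (1/ε)`, which exceeds `log (log (1/ε))`.
-/

open scoped Topology InnerProductSpace

section WeakConvergence

variable {E : Type*} [NormedAddCommGroup E] [InnerProductSpace ℝ E] {ι : Type*} {l : Filter ι}

/-- Weak convergence in a real inner product space, along a filter on the indices. -/
def WeakTendsto (x : ι → E) (l : Filter ι) (y : E) : Prop :=
  ∀ z : E, Tendsto (fun n => ⟪z, x n⟫_ℝ) l (𝓝 ⟪z, y⟫_ℝ)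

namespace WeakTendsto

variable {x x' : ι → E} {y y' : E}

lemma sub (h : WeakTendsto x l y) (h' : WeakTendsto x' l y') :
    WeakTendsto (fun n => x n - x' n) l (y - y') := fun z => by
  simpa only [inner_sub_right] using (h z).sub (h' z)

lemma of_tendsto (h : Tendsto x l (𝓝 y)) : WeakTendsto x l y := fun _ =>
  Tendsto.inner tendsto_const_nhds h

lemma unique [l.NeBot] (h : WeakTendsto x l y) (h' : WeakTendsto x l y') : y = y' :=
  ext_inner_left ℝ fun z => tendsto_nhds_unique (h z) (h' z)

lemma norm_le [l.NeBot] (h : WeakTendsto x l y) {b : ι → ℝ} {c : ℝ} (hb : Tendsto b l (𝓝 c))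
    (hx : ∀ᶠ n in l, ‖x n‖ ≤ b n) : ‖y‖ ≤ c := by
  have hc : 0 ≤ c := ge_of_tendsto hb (hx.mono fun n hn => (norm_nonneg _).trans hn)
  have hy : ‖y‖ * ‖y‖ ≤ ‖y‖ * c := by
    rw [← real_inner_self_eq_norm_mul_norm]
    refine le_of_tendsto_of_tendsto (h y) (hb.const_mul ‖y‖) (hx.mono fun n hn => ?_)
    exact (real_inner_le_norm _ _).trans (mul_le_mul_of_nonneg_left hn (norm_nonneg y))
  exact not_lt.1 fun hlt => hy.not_gt (mul_lt_mul_of_pos_left hlt (hc.trans_lt hlt))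

lemma map [CompleteSpace E] {F : Type*} [NormedAddCommGroup F] [NormedSpace ℝ F]
    [FiniteDimensional ℝ F] (h : WeakTendsto x l y) (φ : E →L[ℝ] F) :
    Tendsto (fun n => φ (x n)) l (𝓝 (φ y)) := by
  let e := (Module.finBasis ℝ F).equivFunL
  suffices Tendsto (fun n => e (φ (x n))) l (𝓝 (e (φ y))) by
    simpa [Function.comp_def] using (e.symm.continuous.tendsto _).comp this
  refine tendsto_pi_nhds.2 fun i => ?_
  let ψ : StrongDual ℝ E := (ContinuousLinearMap.proj i) ∘L e.toContinuousLinearMap ∘L φ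
  have hψ : ∀ v, ⟪(InnerProductSpace.toDual ℝ E).symm ψ, v⟫_ℝ = e (φ v) i := fun v =>
    InnerProductSpace.toDual_symm_apply
  simpa only [hψ] using h ((InnerProductSpace.toDual ℝ E).symm ψ)

lemma exists_of_norm_le [CompleteSpace E] (U : Ultrafilter ι) {R : ℝ} (hx : ∀ n, ‖x n‖ ≤ R) :
    ∃ y, WeakTendsto x U y := by
  let ψ : ι → WeakDual ℝ E := fun n =>
    StrongDual.toWeakDual (InnerProductSpace.toDual ℝ E (x n))
  obtain ⟨a, -, ha⟩ := (WeakDual.isCompact_closedBall (𝕜 := ℝ) (E := E) 0 R).ultrafilter_le_nhds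
    (U.map ψ) (le_principal_iff.2
      (mem_map.2 (univ_mem' fun n => by simpa [ψ] using hx n)))
  refine ⟨(InnerProductSpace.toDual ℝ E).symm (WeakDual.toStrongDual a), fun z => ?_⟩
  have hz : Tendsto (fun n => ψ n z) U (𝓝 (a z)) :=
    ((WeakDual.eval_continuous z).tendsto a).comp ha
  rw [real_inner_comm, InnerProductSpace.toDual_symm_apply]
  simpa [ψ, real_inner_comm z] using hz

/-- On bounded families, weak convergence may be tested on a separating set of functionals, because
any weak limit along the ultrafilter is then identified by them. -/
lemma of_separating [CompleteSpace E] {U : Ultrafilter ι} {R : ℝ} (hx : ∀ n, ‖x n‖ ≤ R)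
    {κ : Type*} {F : κ → Type*} [∀ i, NormedAddCommGroup (F i)] [∀ i, NormedSpace ℝ (F i)]
    [∀ i, FiniteDimensional ℝ (F i)] (φ : ∀ i, E →L[ℝ] F i)
    (hφ : ∀ v w, (∀ i, φ i v = φ i w) → v = w)
    (h : ∀ i, Tendsto (fun n => φ i (x n)) U (𝓝 (φ i y))) : WeakTendsto x U y := by
  obtain ⟨w, hw⟩ := exists_of_norm_le U hx
  rwa [hφ y w fun i => tendsto_nhds_unique (h i) (hw.map (φ i))]

end WeakTendsto

variable {F : Type*} [NormedAddCommGroup F] [InnerProductSpace ℝ F]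

/-- Weak-to-weak continuity of a nonlinear map on bounded sets, tested along ultrafilters on `ℕ`. -/
def WeaklyContinuousOnBounded (G : E → F) : Prop :=
  ∀ (U : Ultrafilter ℕ) (R : ℝ) (x : ℕ → E) (y : E), (∀ n, ‖x n‖ ≤ R) → WeakTendsto x U y →
    WeakTendsto (fun n => G (x n)) U (G y)

lemma WeaklyContinuousOnBounded.exists_abs_inner_sub_le [CompleteSpace E] {G : E → F}
    (hG : WeaklyContinuousOnBounded G) (z : F) (R : ℝ) {η : ℝ} (hη : 0 < η) :
    ∃ ρ > 0, ∀ x y, ‖x‖ ≤ R → ‖y‖ ≤ R → ‖x - y‖ < ρ → |⟪z, G x⟫_ℝ - ⟪z, G y⟫_ℝ| ≤ η := by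
  by_contra! hcon
  choose! x y hx hy hxy hfar using fun n : ℕ => hcon (1 / ((n : ℝ) + 1)) (by positivity)
  let U : Ultrafilter ℕ := hyperfilter ℕ
  obtain ⟨v, hv⟩ := WeakTendsto.exists_of_norm_le U hx
  have hsub : Tendsto (fun n => x n - y n) U (𝓝 0) :=
    squeeze_zero_norm (fun n => (hxy n).le)
      (tendsto_one_div_add_atTop_nhds_zero_nat.mono_left Nat.hyperfilter_le_atTop)
  have hv' : WeakTendsto y U v := by simpa using hv.sub (.of_tendsto hsub)
  have hlim := (((hG U R x v hx hv) z).sub ((hG U R y v hy hv') z)).abs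
  rw [sub_self, abs_zero] at hlim
  exact hη.not_ge (ge_of_tendsto hlim (.of_forall fun n => (hfar n).le))

end WeakConvergence

section Peano

variable {E : Type*} [NormedAddCommGroup E] [InnerProductSpace ℝ E] {G : E → E} {C : ℝ} {x₀ : E}

/-- The explicit Euler scheme with step `h` for `X' = G X`. -/
def euler (G : E → E) (x₀ : E) (h : ℝ) (i : ℕ) : E :=
  (fun x => x + h • G x)^[i] x₀

lemma euler_succ (G : E → E) (x₀ : E) (h : ℝ) (i : ℕ) :
    euler G x₀ h (i + 1) = euler G x₀ h i + h • G (euler G x₀ h i) :=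
  Function.iterate_succ_apply' _ _ _

lemma norm_euler_le (hG : ∀ x, ‖G x‖ ≤ C * ‖x‖) {h : ℝ} (hh : 0 ≤ h) (i : ℕ) :
    ‖euler G x₀ h i‖ ≤ ‖x₀‖ * Real.exp (C * (i * h)) := by
  induction i with
  | zero => simp [euler]
  | succ i ih =>
    calc ‖euler G x₀ h (i + 1)‖ ≤ ‖euler G x₀ h i‖ + h * (C * ‖euler G x₀ h i‖) := by
          rw [euler_succ]
          refine (norm_add_le _ _).trans ?_
          rw [norm_smul, Real.norm_of_nonneg hh]
          gcongr
          exact hG _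
      _ = ‖euler G x₀ h i‖ * (C * h + 1) := by ring
      _ ≤ ‖euler G x₀ h i‖ * Real.exp (C * h) := by gcongr; exact Real.add_one_le_exp _
      _ ≤ ‖x₀‖ * Real.exp (C * (i * h)) * Real.exp (C * h) := by gcongr
      _ = ‖x₀‖ * Real.exp (C * ((i + 1 : ℕ) * h)) := by
          rw [mul_assoc, ← Real.exp_add]; push_cast; ring_nf

lemma norm_map_euler_sub_le {V : Type*} [NormedAddCommGroup V] [NormedSpace ℝ V] (φ : E →L[ℝ] V)
    {a : V} {η h : ℝ} (hh : 0 ≤ h) {i j : ℕ} (hij : i ≤ j)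
    (hη : ∀ l, i ≤ l → l < j → ‖φ (G (euler G x₀ h l)) - a‖ ≤ η) :
    ‖φ (euler G x₀ h j) - φ (euler G x₀ h i) - (j * h - i * h) • a‖ ≤ (j * h - i * h) * η := by
  induction j, hij using Nat.le_induction with
  | base => simp
  | succ j hij ih =>
    have hstep : φ (euler G x₀ h (j + 1)) - φ (euler G x₀ h i) - ((j + 1 : ℕ) * h - i * h) • a
        = (φ (euler G x₀ h j) - φ (euler G x₀ h i) - (j * h - i * h) • a)
          + h • (φ (G (euler G x₀ h j)) - a) := by
      rw [euler_succ, map_add, map_smul]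
      push_cast
      module
    calc _ ≤ (j * h - i * h) * η + h * η := by
          rw [hstep]
          refine (norm_add_le _ _).trans (add_le_add (ih fun l hl hl' => hη l hl (by lia)) ?_)
          rw [norm_smul, Real.norm_of_nonneg hh]
          gcongr
          exact hη j hij (by lia)
      _ = _ := by push_cast; ring

/-- The last point before `t` of the time grid with step `1 / n`. -/
def gridTime (n : ℕ) (t : ℝ) : ℝ :=
  ⌊t * n⌋₊ * (n : ℝ)⁻¹

lemma gridTime_le {t : ℝ} (ht : 0 ≤ t) (n : ℕ) : gridTime n t ≤ t := by
  rw [gridTime, ← div_eq_mul_inv]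
  exact div_le_of_le_mul₀ (by positivity) ht (Nat.floor_le (by positivity))

lemma gridTime_mono (n : ℕ) : Monotone (gridTime n) := fun s t hst => by
  unfold gridTime
  gcongr

lemma tendsto_gridTime {t : ℝ} (ht : 0 ≤ t) :
    Tendsto (fun n => gridTime n t) (hyperfilter ℕ) (𝓝 t) := by
  simpa only [gridTime, div_eq_mul_inv, Function.comp_def] using
    ((tendsto_nat_floor_mul_div_atTop ht).comp tendsto_natCast_atTop_atTop).mono_left
      Nat.hyperfilter_le_atTop

lemma tendsto_gridTime_sub {s t : ℝ} (hs : 0 ≤ s) (hst : s ≤ t) :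
    Tendsto (fun n => gridTime n t - gridTime n s) (hyperfilter ℕ) (𝓝 (t - s)) :=
  (tendsto_gridTime (hs.trans hst)).sub (tendsto_gridTime hs)

/-- The piecewise constant curve through the points of the Euler scheme with step `1 / n`. -/
def eulerCurve (G : E → E) (x₀ : E) (n : ℕ) (t : ℝ) : E :=
  euler G x₀ (n : ℝ)⁻¹ ⌊t * n⌋₊

lemma norm_eulerCurve_le (hC : 0 ≤ C) (hG : ∀ x, ‖G x‖ ≤ C * ‖x‖) {T t : ℝ}
    (ht : t ∈ Set.Icc 0 T) (n : ℕ) : ‖eulerCurve G x₀ n t‖ ≤ ‖x₀‖ * Real.exp (C * T) := by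
  refine (norm_euler_le hG (by positivity) _).trans ?_
  gcongr
  exact (gridTime_le ht.1 n).trans ht.2

lemma norm_map_eulerCurve_sub_le {V : Type*} [NormedAddCommGroup V] [NormedSpace ℝ V]
    (φ : E →L[ℝ] V) {a : V} {η : ℝ} (n : ℕ) {s t : ℝ} (hst : s ≤ t)
    (hη : ∀ r ∈ Set.Icc s t, ‖φ (G (eulerCurve G x₀ n r)) - a‖ ≤ η) :
    ‖φ (eulerCurve G x₀ n t) - φ (eulerCurve G x₀ n s) - (gridTime n t - gridTime n s) • a‖
      ≤ (gridTime n t - gridTime n s) * η := by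
  refine norm_map_euler_sub_le φ (by positivity) (Nat.floor_mono (by gcongr)) fun l hl hl' => ?_
  have hn : (0 : ℝ) < n := by
    rcases n.eq_zero_or_pos with rfl | hn
    · simp at hl'
    · exact_mod_cast hn
  have hlt : (l : ℝ) ≤ t * n := (Nat.lt_of_lt_floor hl').le
  have hfloor : ⌊max s (l / n) * n⌋₊ = l := by
    rw [max_mul_of_nonneg _ _ hn.le, div_mul_cancel₀ _ hn.ne', Nat.floor_mono.map_max,
      Nat.floor_natCast, max_eq_right hl]
  simpa only [eulerCurve, hfloor] using
    hη (max s (l / n)) ⟨le_max_left _ _, max_le hst ((div_le_iff₀ hn).2 hlt)⟩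

lemma norm_eulerCurve_sub_le (hC : 0 ≤ C) (hG : ∀ x, ‖G x‖ ≤ C * ‖x‖) {T s t : ℝ} (hs : 0 ≤ s)
    (hst : s ≤ t) (htT : t ≤ T) (n : ℕ) :
    ‖eulerCurve G x₀ n t - eulerCurve G x₀ n s‖
      ≤ (gridTime n t - gridTime n s) * (C * (‖x₀‖ * Real.exp (C * T))) := by
  have hGr : ∀ r ∈ Set.Icc s t,
      ‖G (eulerCurve G x₀ n r)‖ ≤ C * (‖x₀‖ * Real.exp (C * T)) := fun r hr => (hG _).trans
    (mul_le_mul_of_nonneg_left (norm_eulerCurve_le hC hG ⟨hs.trans hr.1, hr.2.trans htT⟩ n) hC)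
  simpa using norm_map_eulerCurve_sub_le (ContinuousLinearMap.id ℝ E) (a := 0) n hst
    fun r hr => by simpa using hGr r hr

/-- `X` is a pointwise weak limit of the Euler curves. -/
def IsEulerLimit (G : E → E) (x₀ : E) (X : ℝ → E) : Prop :=
  ∀ t, 0 ≤ t → WeakTendsto (fun n => eulerCurve G x₀ n t) (hyperfilter ℕ) (X t)

lemma exists_isEulerLimit [CompleteSpace E] (hC : 0 ≤ C) (hG : ∀ x, ‖G x‖ ≤ C * ‖x‖) :
    ∃ X, IsEulerLimit G x₀ X := by
  refine Classical.skolem.1 (fun t => ?_ : ∀ t, ∃ y, 0 ≤ t →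
    WeakTendsto (fun n => eulerCurve G x₀ n t) (hyperfilter ℕ) y)
  by_cases ht : 0 ≤ t
  · obtain ⟨y, hy⟩ := WeakTendsto.exists_of_norm_le (hyperfilter ℕ)
      (norm_eulerCurve_le (x₀ := x₀) hC hG ⟨ht, le_rfl⟩)
    exact ⟨y, fun _ => hy⟩
  · exact ⟨0, fun h => absurd h ht⟩

namespace IsEulerLimit

variable {X : ℝ → E}

lemma apply_zero (hX : IsEulerLimit G x₀ X) : X 0 = x₀ :=
  (hX 0 le_rfl).unique (by simpa [eulerCurve, euler] using .of_tendsto tendsto_const_nhds)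

lemma norm_le (hX : IsEulerLimit G x₀ X) (hC : 0 ≤ C) (hG : ∀ x, ‖G x‖ ≤ C * ‖x‖) {t : ℝ}
    (ht : 0 ≤ t) : ‖X t‖ ≤ ‖x₀‖ * Real.exp (C * t) :=
  (hX t ht).norm_le tendsto_const_nhds
    (.of_forall fun n => norm_eulerCurve_le hC hG ⟨ht, le_rfl⟩ n)

lemma norm_sub_le (hX : IsEulerLimit G x₀ X) (hC : 0 ≤ C) (hG : ∀ x, ‖G x‖ ≤ C * ‖x‖)
    {T s t : ℝ} (hs : 0 ≤ s) (hst : s ≤ t) (htT : t ≤ T) :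
    ‖X t - X s‖ ≤ (t - s) * (C * (‖x₀‖ * Real.exp (C * T))) :=
  ((hX t (hs.trans hst)).sub (hX s hs)).norm_le ((tendsto_gridTime_sub hs hst).mul_const _)
    (.of_forall fun n => norm_eulerCurve_sub_le hC hG hs hst htT n)

lemma continuousOn (hX : IsEulerLimit G x₀ X) (hC : 0 ≤ C) (hG : ∀ x, ‖G x‖ ≤ C * ‖x‖) (T : ℝ) :
    ContinuousOn X (Set.Icc 0 T) := by
  refine (LipschitzOnWith.of_dist_le_mul
    (K := (C * (‖x₀‖ * Real.exp (C * T))).toNNReal) fun t ht s hs => ?_).continuousOn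
  rw [dist_eq_norm, Real.dist_eq, Real.coe_toNNReal _ (by positivity), mul_comm]
  rcases le_total s t with hst | hts
  · rw [abs_of_nonneg (sub_nonneg.2 hst)]
    exact hX.norm_sub_le hC hG hs.1 hst ht.2
  · rw [norm_sub_rev, abs_sub_comm, abs_of_nonneg (sub_nonneg.2 hts)]
    exact hX.norm_sub_le hC hG ht.1 hts hs.2

/-- The Euler curves stay uniformly close to their value at `s` on short intervals `[s, t]`, so
uniform weak continuity makes their slope nearly constant there; the estimate survives the weak
limit. -/
lemma exists_abs_inner_sub_le [CompleteSpace E] (hX : IsEulerLimit G x₀ X) (hC : 0 ≤ C)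
    (hG : ∀ x, ‖G x‖ ≤ C * ‖x‖) (hGw : WeaklyContinuousOnBounded G) (z : E) {T η : ℝ}
    (hη : 0 < η) : ∃ ρ > 0, ∀ s t, 0 ≤ s → s ≤ t → t ≤ T → t - s < ρ →
      |⟪z, X t⟫_ℝ - ⟪z, X s⟫_ℝ - (t - s) * ⟪z, G (X s)⟫_ℝ| ≤ (t - s) * η := by
  set R := ‖x₀‖ * Real.exp (C * T)
  obtain ⟨ρ, hρ, hρη⟩ := hGw.exists_abs_inner_sub_le z R hη
  refine ⟨ρ / (C * R + 1), by positivity, fun s t hs hst htT hlt => ?_⟩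
  rw [lt_div_iff₀ (by positivity)] at hlt
  have hgrid := tendsto_gridTime_sub hs hst
  have hR : ∀ n r, r ∈ Set.Icc s t → ‖eulerCurve G x₀ n r‖ ≤ R := fun n r hr =>
    norm_eulerCurve_le hC hG ⟨hs.trans hr.1, hr.2.trans htT⟩ n
  have hslope := hGw (hyperfilter ℕ) R _ _ (fun n => hR n s ⟨le_rfl, hst⟩) (hX s hs)
  refine le_of_tendsto_of_tendsto
    ((((hX t (hs.trans hst)) z).sub ((hX s hs) z)).sub (hgrid.mul (hslope z))).abs
    (hgrid.mul_const η) ?_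
  filter_upwards [(hgrid.mul_const (C * R + 1)).eventually_lt_const hlt] with n hn
  refine norm_map_eulerCurve_sub_le (innerSL ℝ z) n hst fun r hr =>
    hρη _ _ (hR n r hr) (hR n s ⟨le_rfl, hst⟩) ?_
  calc ‖eulerCurve G x₀ n r - eulerCurve G x₀ n s‖
      ≤ (gridTime n r - gridTime n s) * (C * R) :=
        norm_eulerCurve_sub_le hC hG hs hr.1 (hr.2.trans htT) n
    _ ≤ (gridTime n t - gridTime n s) * (C * R + 1) := by
        have := gridTime_mono n hr.1
        have := gridTime_mono n hr.2
        gcongr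
        · linarith
        · linarith
    _ < ρ := hn

lemma hasDerivWithinAt_inner [CompleteSpace E] (hX : IsEulerLimit G x₀ X) (hC : 0 ≤ C)
    (hG : ∀ x, ‖G x‖ ≤ C * ‖x‖) (hGw : WeaklyContinuousOnBounded G) (z : E) {s : ℝ}
    (hs : 0 ≤ s) : HasDerivWithinAt (fun t => ⟪z, X t⟫_ℝ) ⟪z, G (X s)⟫_ℝ (Set.Ioi s) s := by
  rw [hasDerivWithinAt_iff_isLittleO, Asymptotics.isLittleO_iff]
  intro η hη
  obtain ⟨ρ, hρ, hinc⟩ := hX.exists_abs_inner_sub_le hC hG hGw z (T := s + 1) hη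
  filter_upwards [Ioo_mem_nhdsGT (lt_add_of_pos_right s (lt_min hρ one_pos))] with t ht
  have hlt : t - s < min ρ 1 := sub_lt_iff_lt_add'.2 ht.2
  rw [Real.norm_of_nonneg (sub_nonneg.2 ht.1.le), mul_comm η]
  exact hinc s t hs ht.1.le (by linarith [min_le_right ρ 1]) (hlt.trans_le (min_le_left _ _))

lemma eq_add_integral [CompleteSpace E] (hX : IsEulerLimit G x₀ X) (hC : 0 ≤ C)
    (hG : ∀ x, ‖G x‖ ≤ C * ‖x‖) (hGc : Continuous G) (hGw : WeaklyContinuousOnBounded G)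
    {t : ℝ} (ht : 0 ≤ t) : X t = x₀ + ∫ s in (0 : ℝ)..t, G (X s) := by
  have hXc : ContinuousOn X (Set.uIcc 0 t) := by
    simpa only [Set.uIcc_of_le ht] using hX.continuousOn hC hG t
  have hGX : ContinuousOn (fun s => G (X s)) (Set.uIcc 0 t) := hGc.comp_continuousOn hXc
  refine ext_inner_left ℝ fun z => ?_
  have hftc := intervalIntegral.integral_eq_sub_of_hasDeriv_right
    (f := fun s => ⟪z, X s⟫_ℝ) (continuousOn_const.inner hXc)
    (fun s hs => hX.hasDerivWithinAt_inner hC hG hGw z (by simpa [ht] using hs.1.le))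
    (continuousOn_const.inner hGX).intervalIntegrable
  have hcomm := (innerSL ℝ z).intervalIntegral_comp_comm (μ := volume) hGX.intervalIntegrable
  simp only [innerSL_apply_apply] at hcomm
  rw [inner_add_right, ← hcomm, hftc, hX.apply_zero, add_sub_cancel]

end IsEulerLimit

/-- Peano's theorem in a Hilbert space: norm continuity alone does not suffice in infinite
dimensions, and weak continuity replaces the compactness that is lost. -/
theorem exists_integralCurve_of_linearGrowth [CompleteSpace E] (hC : 0 ≤ C)
    (hG : ∀ x, ‖G x‖ ≤ C * ‖x‖) (hGc : Continuous G) (hGw : WeaklyContinuousOnBounded G)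
    (x₀ : E) (T : ℝ) : ∃ X : ℝ → E, X 0 = x₀ ∧ ∀ t ∈ Set.Icc 0 T,
      ‖X t‖ ≤ ‖x₀‖ * Real.exp (C * t) ∧ HasDerivWithinAt X (G (X t)) (Set.Icc 0 T) t := by
  obtain ⟨X, hX⟩ := exists_isEulerLimit (x₀ := x₀) hC hG
  refine ⟨X, hX.apply_zero, fun t ht => ⟨hX.norm_le hC hG ht.1, ?_⟩⟩
  have hderiv := ODE.hasDerivWithinAt_picard_Icc (f := fun _ => G) (u := Set.univ)
    (Set.left_mem_Icc.2 (ht.1.trans ht.2)) (hGc.comp continuous_snd).continuousOn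
    (hX.continuousOn hC hG T) (fun _ _ => Set.mem_univ _) x₀ ht
  exact hderiv.congr (fun s hs => hX.eq_add_integral hC hG hGc hGw hs.1)
    (hX.eq_add_integral hC hG hGc hGw ht.1)

end Peano

section SquareSummable

variable {ι : Type*} {E : ι → Type*} [∀ i, NormedAddCommGroup (E i)]

lemma memℓp_two_iff_tsum_enorm_sq_ne_top {f : ∀ i, E i} :
    Memℓp f 2 ↔ ∑' i, ‖f i‖ₑ ^ 2 ≠ ⊤ := by
  rw [memℓp_gen_iff (by norm_num)]
  simp only [ENNReal.toReal_ofNat, Real.rpow_two, enorm_eq_nnnorm, ← ENNReal.coe_pow]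
  rw [ENNReal.tsum_coe_ne_top_iff_summable, ← NNReal.summable_coe]
  simp only [NNReal.coe_pow, coe_nnnorm]

lemma norm_sq_eq_tsum_norm_sq (f : lp E 2) : ‖f‖ ^ 2 = ∑' i, ‖f i‖ ^ 2 := by
  simpa using lp.norm_rpow_eq_tsum (p := 2) (by norm_num) f

lemma summable_norm_sq (f : lp E 2) : Summable fun i => ‖f i‖ ^ 2 := by
  simpa using (lp.memℓp f).summable (by norm_num)

lemma enorm_sq_eq_tsum_enorm_sq (f : lp E 2) : ‖f‖ₑ ^ 2 = ∑' i, ‖f i‖ₑ ^ 2 := by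
  simp only [← ofReal_norm, ← ENNReal.ofReal_pow (norm_nonneg _)]
  rw [norm_sq_eq_tsum_norm_sq,
    ENNReal.ofReal_tsum_of_nonneg (fun i => by positivity) (summable_norm_sq f)]

end SquareSummable

section SchurTest

lemma sq_tsum_le_tsum_mul_tsum {ι : Type*} {c a b : ι → ℝ≥0∞}
    (h : ∀ i, c i ^ 2 ≤ a i * b i) : (∑' i, c i) ^ 2 ≤ (∑' i, a i) * ∑' i, b i := by
  have hsqrt : ∀ x : ℝ≥0∞, (x ^ (1 / 2 : ℝ)) ^ 2 = x := fun x => by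
    rw [← ENNReal.rpow_mul_natCast]; norm_num
  have hc : ∀ i, c i ≤ a i ^ (1 / 2 : ℝ) * b i ^ (1 / 2 : ℝ) := fun i => by
    rw [← ENNReal.mul_rpow_of_nonneg _ _ (by norm_num), one_div, ENNReal.le_rpow_inv_iff two_pos]
    simpa only [ENNReal.rpow_two] using h i
  let : MeasurableSpace ι := ⊤
  have hcs := ENNReal.lintegral_mul_norm_pow_le (μ := Measure.count) (f := a) (g := b)
    (p := 1 / 2) (q := 1 / 2) (Measurable.of_discrete.aemeasurable)
    (Measurable.of_discrete.aemeasurable) (by norm_num) (by norm_num) (by norm_num)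
  simp only [lintegral_count] at hcs
  calc (∑' i, c i) ^ 2
      ≤ ((∑' i, a i) ^ (1 / 2 : ℝ) * (∑' i, b i) ^ (1 / 2 : ℝ)) ^ 2 := by
        gcongr
        exact (ENNReal.tsum_le_tsum hc).trans hcs
    _ = (∑' i, a i) * ∑' i, b i := by simp only [mul_pow, hsqrt]

variable {𝕜 : Type*} [NormedField 𝕜] {ι κ : Type*}
  {K : ι → κ → 𝕜} {a b : ι → κ → ℝ≥0∞} {A B : ℝ≥0∞}

lemma sq_tsum_enorm_mul_le (hK : ∀ x m, ‖K x m‖ₑ ^ 2 ≤ a x m * b x m)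
    (hA : ∀ x, ∑' m, a x m ≤ A) (U : κ → 𝕜) (x : ι) :
    (∑' m, ‖K x m * U m‖ₑ) ^ 2 ≤ A * ∑' m, b x m * ‖U m‖ₑ ^ 2 := by
  refine (sq_tsum_le_tsum_mul_tsum (a := a x) fun m => ?_).trans
    (mul_le_mul_left (hA x) _)
  rw [enorm_mul, mul_pow, ← mul_assoc]
  gcongr
  exact hK x m

lemma tsum_sq_tsum_enorm_mul_le (hK : ∀ x m, ‖K x m‖ₑ ^ 2 ≤ a x m * b x m)
    (hA : ∀ x, ∑' m, a x m ≤ A) (hB : ∀ m, ∑' x, b x m ≤ B) (U : κ → 𝕜) :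
    ∑' x, (∑' m, ‖K x m * U m‖ₑ) ^ 2 ≤ A * (B * ∑' m, ‖U m‖ₑ ^ 2) := by
  calc ∑' x, (∑' m, ‖K x m * U m‖ₑ) ^ 2
      ≤ ∑' x, A * ∑' m, b x m * ‖U m‖ₑ ^ 2 :=
        ENNReal.tsum_le_tsum fun x => sq_tsum_enorm_mul_le hK hA U x
    _ = A * ∑' m, (∑' x, b x m) * ‖U m‖ₑ ^ 2 := by
        rw [ENNReal.tsum_mul_left, ENNReal.tsum_comm]
        simp only [ENNReal.tsum_mul_right]
    _ ≤ A * (B * ∑' m, ‖U m‖ₑ ^ 2) := by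
        rw [← ENNReal.tsum_mul_left (a := B)]
        gcongr with m
        exact hB m

/-- **Schur test**: the kernel `K` is the geometric mean of two kernels with bounded row sums and
bounded column sums respectively. -/
theorem exists_clm_of_schur [CompleteSpace 𝕜] (hK : ∀ x m, ‖K x m‖ₑ ^ 2 ≤ a x m * b x m)
    (hA : ∀ x, ∑' m, a x m ≤ A) (hB : ∀ m, ∑' x, b x m ≤ B) (hA' : A ≠ ⊤) (hB' : B ≠ ⊤) :
    ∃ D : lp (fun _ : κ => 𝕜) 2 →L[𝕜] lp (fun _ : ι => 𝕜) 2,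
      ∀ U x, D U x = ∑' m, K x m * U m := by
  have hfin : ∀ U : lp (fun _ : κ => 𝕜) 2, A * (B * ∑' m, ‖U m‖ₑ ^ 2) ≠ ⊤ := fun U =>
    ENNReal.mul_ne_top hA' (ENNReal.mul_ne_top hB' (by simp [← enorm_sq_eq_tsum_enorm_sq]))
  have hbound : ∀ U : lp (fun _ : κ => 𝕜) 2,
      ∑' x, ‖∑' m, K x m * U m‖ₑ ^ 2 ≤ A * (B * ∑' m, ‖U m‖ₑ ^ 2) := fun U =>
    (ENNReal.tsum_le_tsum fun x => by gcongr; exact enorm_tsum_le_tsum_enorm).trans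
      (tsum_sq_tsum_enorm_mul_le hK hA hB U)
  have hsum : ∀ (U : lp (fun _ : κ => 𝕜) 2) x, Summable fun m => K x m * U m := fun U x =>
    .of_enorm fun htop => hfin U <| top_le_iff.1 <|
      calc ⊤ = (∑' m, ‖K x m * U m‖ₑ) ^ 2 := by rw [htop, ENNReal.top_pow two_ne_zero]
        _ ≤ ∑' x, (∑' m, ‖K x m * U m‖ₑ) ^ 2 := ENNReal.le_tsum x
        _ ≤ _ := tsum_sq_tsum_enorm_mul_le hK hA hB U
  let D : lp (fun _ : κ => 𝕜) 2 →ₗ[𝕜] lp (fun _ : ι => 𝕜) 2 :=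
    { toFun U := ⟨fun x => ∑' m, K x m * U m, memℓp_two_iff_tsum_enorm_sq_ne_top.2
        (ne_top_of_le_ne_top (hfin U) (hbound U))⟩
      map_add' U V := by
        ext x
        simpa only [lp.coeFn_add, Pi.add_apply, mul_add] using (hsum U x).tsum_add (hsum V x)
      map_smul' c U := by
        ext x
        simpa [mul_left_comm] using (hsum U x).tsum_mul_left c }
  refine ⟨D.mkContinuous (√(A * B).toReal) fun U => ?_, fun U x => rfl⟩
  have hD : ‖D U‖ₑ ^ 2 ≤ A * B * ‖U‖ₑ ^ 2 := by
    rw [enorm_sq_eq_tsum_enorm_sq, enorm_sq_eq_tsum_enorm_sq U, mul_assoc]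
    exact hbound U
  have hreal := ENNReal.toReal_mono (by finiteness) hD
  simp only [ENNReal.toReal_mul, ENNReal.toReal_pow, toReal_enorm] at hreal
  refine (sq_le_sq₀ (norm_nonneg _) (by positivity)).1 ?_
  rwa [mul_pow, Real.sq_sqrt ENNReal.toReal_nonneg, ENNReal.toReal_mul]

end SchurTest

section WeightedSpace

variable {d : ℕ}

lemma jap_sq (m : Fin d → ℤ) : jap m ^ 2 = 1 + ∑ i, (m i : ℝ) ^ 2 :=
  Real.sq_sqrt (by positivity)

lemma one_le_jap (m : Fin d → ℤ) : 1 ≤ jap m :=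
  Real.one_le_sqrt.2 (le_add_of_nonneg_right (by positivity))

lemma one_add_sq_le_jap_sq (m : Fin d → ℤ) (j : Fin d) : 1 + (m j : ℝ) ^ 2 ≤ jap m ^ 2 := by
  rw [jap_sq]
  gcongr
  exact Finset.single_le_sum (f := fun i => (m i : ℝ) ^ 2) (fun _ _ => sq_nonneg _)
    (Finset.mem_univ j)

lemma jap_add_single_sq_le (m : Fin d → ℤ) (j : Fin d) (a : ℤ) :
    jap (m + Pi.single j a) ^ 2 ≤ 2 * (jap m ^ 2 + (a : ℝ) ^ 2) := by
  have hsingle : ∑ i, ((Pi.single j a : Fin d → ℤ) i : ℝ) ^ 2 = (a : ℝ) ^ 2 := by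
    rw [Finset.sum_eq_single j (fun i _ hi => by simp [hi]) (by simp), Pi.single_eq_same]
  calc jap (m + Pi.single j a) ^ 2
      ≤ 1 + ∑ i, (2 * (m i : ℝ) ^ 2 + 2 * ((Pi.single j a : Fin d → ℤ) i : ℝ) ^ 2) := by
        rw [jap_sq]
        gcongr with i
        push_cast [Pi.add_apply]
        linarith [add_sq_le (a := (m i : ℝ)) (b := ((Pi.single j a : Fin d → ℤ) i : ℝ))]
    _ ≤ 2 * (jap m ^ 2 + (a : ℝ) ^ 2) := by
        rw [Finset.sum_add_distrib, ← Finset.mul_sum, ← Finset.mul_sum, hsingle, jap_sq]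
        linarith

/-- The weight `⟨m⟩^k` of `ℓ^{2,k}`, as a complex number. -/
def weight (k : ℕ) (m : Fin d → ℤ) : ℂ := ((jap m ^ k : ℝ) : ℂ)

lemma norm_weight (k : ℕ) (m : Fin d → ℤ) : ‖weight k m‖ = jap m ^ k :=
  Complex.norm_of_nonneg (pow_nonneg (zero_le_one.trans (one_le_jap m)) k)

lemma weight_ne_zero (k : ℕ) (m : Fin d → ℤ) : weight k m ≠ 0 := by
  rw [← norm_ne_zero_iff, norm_weight]
  exact (zero_lt_one.trans_le (one_le_pow₀ (one_le_jap m))).ne'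

/-- The unweighted space `ℓ²(ℤ^d)`. -/
abbrev L2 (d : ℕ) := lp (fun _ : Fin d → ℤ => ℂ) 2

/-- The isometric parametrization `U ↦ ⟨·⟩^{-k} U` of `ℓ^{2,k}` by `ℓ²`. -/
def unwt (k : ℕ) (U : L2 d) (m : Fin d → ℤ) : ℂ := (weight k m)⁻¹ * U m

lemma w2_eq_rpow_tsum (k : ℕ) (f : (Fin d → ℤ) → ℂ) :
    w2 k f = (∑' m, ‖weight k m * f m‖ₑ ^ 2) ^ (1 / 2 : ℝ) := by
  rw [w2, lpn, if_neg ENNReal.ofNat_ne_top]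
  simp only [ENNReal.toReal_ofNat, ENNReal.rpow_two]
  rfl

lemma w2_unwt (k : ℕ) (U : L2 d) : w2 k (unwt k U) = ‖U‖ₑ := by
  simp only [w2_eq_rpow_tsum, unwt, mul_inv_cancel_left₀ (weight_ne_zero k _)]
  rw [← enorm_sq_eq_tsum_enorm_sq, ← ENNReal.rpow_two, ← ENNReal.rpow_mul]
  norm_num

lemma exists_unwt_eq (k : ℕ) {f : (Fin d → ℤ) → ℂ} (hf : w2 k f < ⊤) :
    ∃ U : L2 d, unwt k U = f := by
  rw [w2_eq_rpow_tsum, ENNReal.rpow_lt_top_iff_of_pos (by norm_num)] at hf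
  exact ⟨⟨fun m => weight k m * f m, memℓp_two_iff_tsum_enorm_sq_ne_top.2 hf.ne⟩,
    funext fun m => inv_mul_cancel_left₀ (weight_ne_zero k m) (f m)⟩

lemma unwt_sub (k : ℕ) (U V : L2 d) : unwt k (U - V) = fun m => unwt k U m - unwt k V m :=
  funext fun m => mul_sub _ (U m) (V m)

lemma unwt_smul (k : ℕ) (c : ℝ) (U : L2 d) : unwt k (c • U) = fun m => c • unwt k U m :=
  funext fun m => mul_smul_comm c _ (U m)

lemma tendsto_w2_unwt_iff {ι : Type*} {l : Filter ι} (k : ℕ) {Y : ι → L2 d} :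
    Tendsto (fun s => w2 k (unwt k (Y s))) l (𝓝 0) ↔ Tendsto Y l (𝓝 0) := by
  simp only [w2_unwt, ← tendsto_zero_iff_enorm_tendsto_zero]

lemma contW_unwt (k : ℕ) {S : Set ℝ} {Y : ℝ → L2 d} (hY : ContinuousOn Y S) :
    ContW k S (fun t => unwt k (Y t)) := fun t ht => by
  simp only [← unwt_sub]
  exact (tendsto_w2_unwt_iff k).2 (tendsto_sub_nhds_zero_iff.2 (hY t ht))

lemma derivW_unwt (k : ℕ) {S : Set ℝ} {Y Y' : ℝ → L2 d}
    (hY : ∀ t ∈ S, HasDerivWithinAt Y (Y' t) S t) :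
    DerivW k S (fun t => unwt k (Y t)) (fun t => unwt k (Y' t)) := fun t ht => by
  have hslope := hasDerivWithinAt_iff_tendsto_slope.1 (hY t ht)
  refine ((tendsto_w2_unwt_iff k).2 (tendsto_sub_nhds_zero_iff.2 hslope)).congr fun s => ?_
  simp only [slope_def_module, unwt_sub, unwt_smul]

lemma isC2_unwt (k : ℕ) {S : Set ℝ} {Y Y₁ Y₂ : ℝ → L2 d}
    (h₁ : ∀ t ∈ S, HasDerivWithinAt Y (Y₁ t) S t) (h₂ : ∀ t ∈ S, HasDerivWithinAt Y₁ (Y₂ t) S t)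
    (hY₂ : ContinuousOn Y₂ S) :
    IsC2 k S (fun t => unwt k (Y t)) (fun t => unwt k (Y₁ t)) (fun t => unwt k (Y₂ t)) where
  mem0 t _ := by simp only [w2_unwt, enorm_lt_top]
  mem1 t _ := by simp only [w2_unwt, enorm_lt_top]
  mem2 t _ := by simp only [w2_unwt, enorm_lt_top]
  cont0 := contW_unwt k fun t ht => (h₁ t ht).continuousWithinAt
  cont1 := contW_unwt k fun t ht => (h₂ t ht).continuousWithinAt
  cont2 := contW_unwt k hY₂
  hder1 := derivW_unwt k h₁
  hder2 := derivW_unwt k h₂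

end WeightedSpace

section DiscreteDerivative

variable {d : ℕ}

/-- The summable profile `a ↦ 1/(1 + a²)` on `ℤ` that controls `φⱼ` along its axis. -/
def invOneAddSq (a : ℤ) : ℝ := (1 + (a : ℝ) ^ 2)⁻¹

lemma invOneAddSq_pos (a : ℤ) : 0 < invOneAddSq a := by
  unfold invOneAddSq
  positivity

lemma summable_invOneAddSq : Summable invOneAddSq := by
  have hsum : Summable fun a : ℤ => 2 * (1 / |(a : ℝ) + 1 / 2| ^ (2 : ℝ)) :=
    ((Real.summable_one_div_int_add_rpow (1 / 2) 2).2 one_lt_two).mul_left 2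
  refine hsum.of_nonneg_of_le (fun a => (invOneAddSq_pos a).le) fun a => ?_
  have hne : (a : ℝ) + 1 / 2 ≠ 0 := fun h => by
    have : (2 * a + 1 : ℤ) = 0 := by exact_mod_cast (by linarith : (2 * a + 1 : ℝ) = 0)
    omega
  rw [Real.rpow_two, sq_abs, invOneAddSq, inv_eq_one_div, ← mul_div_assoc,
    div_le_div_iff₀ (by positivity) (by positivity)]
  nlinarith [sq_nonneg ((a : ℝ) - 1 / 2)]

lemma tsum_ofReal_invOneAddSq_ne_top : ∑' a, ENNReal.ofReal (invOneAddSq a) ≠ ⊤ :=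
  summable_invOneAddSq.tsum_ofReal_ne_top

lemma phi_eq_zero {j : Fin d} {n : Fin d → ℤ} (hn : n ∉ Set.range (Pi.single j)) :
    phi d j n = 0 :=
  if_neg fun h => hn ⟨n j, funext fun i => by
    rcases eq_or_ne i j with rfl | hi
    · exact Pi.single_eq_same i _
    · rw [Pi.single_eq_of_ne hi, h i hi]⟩

lemma norm_phi_single_le (j : Fin d) (a : ℤ) :
    ‖phi d j (Pi.single j a)‖ ≤ 2 * invOneAddSq a := by
  have hden : (1 + (a : ℝ) ^ 2) ≤ |4 * (a : ℝ) ^ 2 - 1| := by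
    have hint : 1 + a ^ 2 ≤ |4 * a ^ 2 - 1| := by
      rcases eq_or_ne a 0 with rfl | ha
      · norm_num
      · have : 0 < a ^ 2 := by positivity
        exact le_trans (by linarith) (le_abs_self _)
    exact_mod_cast hint
  have hnorm : ‖phi d j (Pi.single j a)‖ = 4 / (Real.pi * |4 * (a : ℝ) ^ 2 - 1|) := by
    have hcast : (4 * (a : ℂ) ^ 2 - 1) = ((4 * (a : ℝ) ^ 2 - 1 : ℝ) : ℂ) := by push_cast; rfl
    have haxis : ∀ i, i ≠ j → (Pi.single j a : Fin d → ℤ) i = 0 := fun i hi => by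
      rw [Pi.single_eq_of_ne hi]
    rw [phi, if_pos haxis, Pi.single_eq_same, hcast]
    rw [norm_div, norm_mul, norm_mul, Complex.norm_real, Complex.norm_real,
      Real.norm_of_nonneg Real.pi_pos.le, Real.norm_eq_abs]
    simp
  rw [hnorm, invOneAddSq, ← div_eq_mul_inv]
  calc 4 / (Real.pi * |4 * (a : ℝ) ^ 2 - 1|) ≤ 4 / (2 * (1 + (a : ℝ) ^ 2)) := by
        gcongr
        exact Real.two_le_pi
    _ = 2 / (1 + (a : ℝ) ^ 2) := by rw [← div_div]; norm_num

/-- The kernel `⟨x⟩^k φⱼ(x - m) ⟨m⟩^{-k}` of `∂ⱼ` on `ℓ^{2,k}`, transported to `ℓ²`. -/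
def weightedKernel (k : ℕ) (j : Fin d) (x m : Fin d → ℤ) : ℂ :=
  weight k x * phi d j (x - m) * (weight k m)⁻¹

lemma jap_ratio_le {k : ℕ} (hk : k ≤ 1) (m : Fin d → ℤ) (j : Fin d) (a : ℤ) :
    (jap (m + Pi.single j a) ^ k / jap m ^ k) ^ 2 ≤ 2 * (1 + (a : ℝ) ^ 2 * invOneAddSq (m j)) := by
  have hnonneg : 0 ≤ (a : ℝ) ^ 2 * invOneAddSq (m j) :=
    mul_nonneg (sq_nonneg _) (invOneAddSq_pos _).le
  have hm : 0 < jap m ^ 2 := pow_pos (zero_lt_one.trans_le (one_le_jap m)) 2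
  interval_cases k
  · simp only [pow_zero, div_one, one_pow]
    linarith
  · calc (jap (m + Pi.single j a) ^ 1 / jap m ^ 1) ^ 2
        ≤ 2 * (jap m ^ 2 + (a : ℝ) ^ 2) / jap m ^ 2 := by
          rw [pow_one, pow_one, div_pow]
          gcongr
          exact jap_add_single_sq_le m j a
      _ = 2 * (1 + (a : ℝ) ^ 2 * (jap m ^ 2)⁻¹) := by
          rw [mul_div_assoc, add_div, div_self hm.ne', div_eq_mul_inv _ (jap m ^ 2)]
      _ ≤ 2 * (1 + (a : ℝ) ^ 2 * invOneAddSq (m j)) := by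
          rw [invOneAddSq]
          gcongr
          exact one_add_sq_le_jap_sq m j

lemma norm_weightedKernel_sq_le {k : ℕ} (hk : k ≤ 1) (m : Fin d → ℤ) (j : Fin d) (a : ℤ) :
    ‖weightedKernel k j (m + Pi.single j a) m‖ ^ 2 ≤
      (invOneAddSq a + invOneAddSq (m j)) * (8 * invOneAddSq a) := by
  have hs := invOneAddSq_pos a
  have hsq : (a : ℝ) ^ 2 * invOneAddSq a ≤ 1 := by
    rw [invOneAddSq, ← div_eq_mul_inv, div_le_one (by positivity)]
    linarith
  calc ‖weightedKernel k j (m + Pi.single j a) m‖ ^ 2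
      = (jap (m + Pi.single j a) ^ k / jap m ^ k) ^ 2 * ‖phi d j (Pi.single j a)‖ ^ 2 := by
        rw [weightedKernel, add_sub_cancel_left, norm_mul, norm_mul, norm_inv, norm_weight,
          norm_weight]
        ring
    _ ≤ 2 * (1 + (a : ℝ) ^ 2 * invOneAddSq (m j)) * (2 * invOneAddSq a) ^ 2 := by
        gcongr
        · exact (sq_nonneg _).trans (jap_ratio_le hk m j a)
        · exact jap_ratio_le hk m j a
        · exact norm_phi_single_le j a
    _ = 8 * invOneAddSq a *
          (invOneAddSq a + invOneAddSq (m j) * ((a : ℝ) ^ 2 * invOneAddSq a)) := by ring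
    _ ≤ 8 * invOneAddSq a * (invOneAddSq a + invOneAddSq (m j) * 1) := by
        have := invOneAddSq_pos (m j)
        gcongr
    _ = (invOneAddSq a + invOneAddSq (m j)) * (8 * invOneAddSq a) := by ring

/-- The function on `ℤ^d` carried by the `j`-th coordinate axis, with profile `s`. -/
def onAxis (j : Fin d) (s : ℤ → ℝ≥0∞) : (Fin d → ℤ) → ℝ≥0∞ :=
  (Set.range (Pi.single j)).indicator fun n => s (n j)

lemma tsum_onAxis (j : Fin d) (s : ℤ → ℝ≥0∞) : ∑' n, onAxis j s n = ∑' a, s a := by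
  rw [onAxis, ← tsum_subtype, tsum_range (f := fun n : Fin d → ℤ => s (n j))
    (Pi.single_injective j)]
  simp only [Pi.single_eq_same]

lemma enorm_weightedKernel_sq_le {k : ℕ} (hk : k ≤ 1) (j : Fin d) (x m : Fin d → ℤ) :
    ‖weightedKernel k j x m‖ₑ ^ 2 ≤
      onAxis j (fun a => ENNReal.ofReal (invOneAddSq a) +
        ENNReal.ofReal (invOneAddSq (x j - a))) (x - m) *
      onAxis j (fun a => ENNReal.ofReal (8 * invOneAddSq a)) (x - m) := by
  by_cases hx : x - m ∈ Set.range (Pi.single j)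
  · obtain ⟨a, ha⟩ := hx
    obtain rfl : x = m + Pi.single j a := by rw [ha, add_sub_cancel]
    have hs := (invOneAddSq_pos a).le
    have hm := (invOneAddSq_pos (m j)).le
    rw [add_sub_cancel_left, onAxis, onAxis, Set.indicator_of_mem (Set.mem_range_self a),
      Set.indicator_of_mem (Set.mem_range_self a), Pi.add_apply, Pi.single_eq_same,
      add_sub_cancel_right, ← ENNReal.ofReal_add hs hm, ← ENNReal.ofReal_mul (by positivity),
      ← ofReal_norm, ← ENNReal.ofReal_pow (norm_nonneg _)]
    exact ENNReal.ofReal_le_ofReal (norm_weightedKernel_sq_le hk m j a)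
  · simp [weightedKernel, phi_eq_zero hx]

lemma tsum_onAxis_sub (j : Fin d) (x : Fin d → ℤ) :
    ∑' m, onAxis j (fun a => ENNReal.ofReal (invOneAddSq a) +
      ENNReal.ofReal (invOneAddSq (x j - a))) (x - m) =
      2 * ∑' a, ENNReal.ofReal (invOneAddSq a) := by
  refine ((Equiv.subLeft x).tsum_eq (onAxis j _)).trans ?_
  rw [tsum_onAxis, ENNReal.tsum_add, two_mul]
  congr 1
  exact (Equiv.subLeft (x j)).tsum_eq fun a => ENNReal.ofReal (invOneAddSq a)

theorem exists_clm_unwt_eq_pd {k : ℕ} (hk : k ≤ 1) (j : Fin d) :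
    ∃ D : L2 d →L[ℂ] L2 d, ∀ U, pd j (unwt k U) = unwt k (D U) := by
  obtain ⟨D, hD⟩ := exists_clm_of_schur (enorm_weightedKernel_sq_le hk j)
    (fun x => (tsum_onAxis_sub j x).le)
    (fun m => (((Equiv.subRight m).tsum_eq (onAxis j _)).trans (tsum_onAxis j _)).le)
    (ENNReal.mul_ne_top ENNReal.ofNat_ne_top tsum_ofReal_invOneAddSq_ne_top)
    (summable_invOneAddSq.mul_left 8).tsum_ofReal_ne_top
  refine ⟨D, fun U => funext fun x => ?_⟩
  rw [unwt, hD, ← tsum_mul_left, pd, dconv]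
  refine tsum_congr fun m => ?_
  rw [unwt, weightedKernel]
  field_simp [weight_ne_zero k x, weight_ne_zero k m]

end DiscreteDerivative

section Nemytskii

variable {ι W V : Type*} [NormedAddCommGroup W] [NormedAddCommGroup V] {Φ : ι → W → V} {C : ℝ}

/-- The superposition (Nemytskii) operator `s ↦ (x ↦ Φ x (s x))` on `ℓ²`, for a family `Φ` of maps
of linear growth. -/
def nemytskii (hΦ : ∀ x s, ‖Φ x s‖ ≤ C * ‖s‖) (s : lp (fun _ : ι => W) 2) :
    lp (fun _ : ι => V) 2 :=
  ⟨fun x => Φ x (s x), ((lp.memℓp s).norm.const_mul C |>.mono fun x => by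
    simpa only [norm_norm] using hΦ x (s x)).of_norm⟩

lemma norm_nemytskii_le (hC : 0 ≤ C) (hΦ : ∀ x s, ‖Φ x s‖ ≤ C * ‖s‖)
    (s : lp (fun _ : ι => W) 2) : ‖nemytskii hΦ s‖ ≤ C * ‖s‖ :=
  calc ‖nemytskii hΦ s‖ ≤ ‖C • lp.toNorm s‖ :=
        lp.norm_mono two_ne_zero fun x => (hΦ x (s x)).trans (le_abs_self _)
    _ = C * ‖s‖ := by rw [norm_smul, Real.norm_of_nonneg hC, lp.norm_toNorm]

lemma norm_sub_sq_le_of_linearGrowth {φ : W → V} (hφ : ∀ s, ‖φ s‖ ≤ C * ‖s‖) (s s' : W) :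
    ‖φ s' - φ s‖ ^ 2 ≤ 4 * C ^ 2 * ‖s' - s‖ ^ 2 + 6 * C ^ 2 * ‖s‖ ^ 2 := by
  have hsq : ∀ t, ‖φ t‖ ^ 2 ≤ C ^ 2 * ‖t‖ ^ 2 := fun t => by
    rw [← mul_pow]
    exact pow_le_pow_left₀ (norm_nonneg _) (hφ t) 2
  calc ‖φ s' - φ s‖ ^ 2 ≤ (‖φ s'‖ + ‖φ s‖) ^ 2 := by
        gcongr
        exact norm_sub_le _ _
    _ ≤ 2 * (C ^ 2 * ‖s'‖ ^ 2 + C ^ 2 * ‖s‖ ^ 2) :=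
        add_sq_le.trans (by gcongr <;> exact hsq _)
    _ ≤ 2 * (C ^ 2 * (‖s' - s‖ + ‖s‖) ^ 2 + C ^ 2 * ‖s‖ ^ 2) := by
        gcongr
        exact norm_le_norm_sub_add s' s
    _ ≤ 2 * (C ^ 2 * (2 * (‖s' - s‖ ^ 2 + ‖s‖ ^ 2)) + C ^ 2 * ‖s‖ ^ 2) := by
        gcongr
        exact add_sq_le
    _ = 4 * C ^ 2 * ‖s' - s‖ ^ 2 + 6 * C ^ 2 * ‖s‖ ^ 2 := by ring

/-- The part of `‖Φ x (s' x) - Φ x (s x)‖²` that exceeds a multiple of `‖s' x - s x‖²` is dominated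
by a multiple of `‖s x‖²` and tends to zero pointwise, hence in `ℓ¹`. -/
lemma continuous_nemytskii [NormedSpace ℝ W] (hΦ : ∀ x s, ‖Φ x s‖ ≤ C * ‖s‖)
    (hΦc : ∀ x, Continuous (Φ x)) : Continuous (nemytskii hΦ) := by
  refine continuous_iff_continuousAt.2 fun s => tendsto_iff_norm_sub_tendsto_zero.2 ?_
  let exc : lp (fun _ : ι => W) 2 → ι → ℝ := fun s' x =>
    max 0 (‖Φ x (s' x) - Φ x (s x)‖ ^ 2 - 4 * C ^ 2 * ‖s' x - s x‖ ^ 2)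
  have hexc_le : ∀ s' x, ‖exc s' x‖ ≤ 6 * C ^ 2 * ‖s x‖ ^ 2 := fun s' x => by
    rw [Real.norm_of_nonneg (le_max_left _ _)]
    have := norm_sub_sq_le_of_linearGrowth (hΦ x) (s x) (s' x)
    exact max_le (by positivity) (by linarith)
  have hdom : Summable fun x => 6 * C ^ 2 * ‖s x‖ ^ 2 := (summable_norm_sq s).mul_left _
  have hexc_lim : Tendsto (fun s' => ∑' x, exc s' x) (𝓝 s) (𝓝 0) := by
    rw [← tsum_zero (α := ℝ) (β := ι)]
    refine tendsto_tsum_of_dominated_convergence hdom (fun x => ?_)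
      (.of_forall fun s' => hexc_le s')
    have hev : Continuous fun s' : lp (fun _ : ι => W) 2 => s' x :=
      (lp.evalCLM ℝ (fun _ : ι => W) 2 x).continuous
    have hcont : Continuous fun s' => exc s' x :=
      continuous_const.max (((((hΦc x).comp hev).sub continuous_const).norm.pow 2).sub
        (((hev.sub continuous_const).norm.pow 2).const_mul _))
    simpa [exc] using hcont.tendsto s
  have hle : ∀ s', ‖nemytskii hΦ s' - nemytskii hΦ s‖ ^ 2 ≤
      ∑' x, exc s' x + 4 * C ^ 2 * ‖s' - s‖ ^ 2 := fun s' => by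
    rw [norm_sq_eq_tsum_norm_sq, norm_sq_eq_tsum_norm_sq (s' - s), ← tsum_mul_left,
      ← (hdom.of_norm_bounded (hexc_le s')).tsum_add ((summable_norm_sq (s' - s)).mul_left _)]
    refine (summable_norm_sq _).tsum_le_tsum (fun x => ?_)
      ((hdom.of_norm_bounded (hexc_le s')).add ((summable_norm_sq (s' - s)).mul_left _))
    exact sub_le_iff_le_add.1 (le_max_right 0 _)
  have hlim : Tendsto (fun s' => ∑' x, exc s' x + 4 * C ^ 2 * ‖s' - s‖ ^ 2) (𝓝 s) (𝓝 0) := by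
    simpa using hexc_lim.add
      (((tendsto_iff_norm_sub_tendsto_zero.1 tendsto_id).pow 2).const_mul (4 * C ^ 2))
  have hsq := squeeze_zero (fun s' => sq_nonneg _) hle hlim
  simpa using hsq.sqrt

end Nemytskii

section SecondOrder

/-- The first-order vector field `(u, v) ↦ (v, N(u, v))` of the second-order equation
`u'' = N(u, u')`. -/
def secondOrderField {E : Type*} (N : WithLp 2 (E × E) → E) (p : WithLp 2 (E × E)) :
    WithLp 2 (E × E) :=
  WithLp.toLp 2 (p.snd, N p)

variable {E : Type*} [NormedAddCommGroup E]

lemma norm_secondOrderField_le {N : WithLp 2 (E × E) → E} {B : ℝ} (hN : ∀ p, ‖N p‖ ≤ B * ‖p‖)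
    (p : WithLp 2 (E × E)) : ‖secondOrderField N p‖ ≤ (1 + B) * ‖p‖ :=
  calc ‖secondOrderField N p‖ = √(‖p.snd‖ ^ 2 + ‖N p‖ ^ 2) := WithLp.prod_norm_eq_of_L2 _
    _ ≤ ‖p.snd‖ + ‖N p‖ := Real.sqrt_le_iff.2 ⟨by positivity, by
        nlinarith [norm_nonneg p.snd, norm_nonneg (N p)]⟩
    _ ≤ (1 + B) * ‖p‖ := by
        rw [add_mul, one_mul]
        exact add_le_add (WithLp.norm_snd_le _ p) (hN p)

lemma continuous_secondOrderField {N : WithLp 2 (E × E) → E} (hN : Continuous N) :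
    Continuous (secondOrderField N) :=
  (WithLp.prod_continuous_toLp 2 E E).comp
    ((continuous_snd.comp (WithLp.prod_continuous_ofLp 2 E E)).prodMk hN)

variable [InnerProductSpace ℝ E]

lemma weaklyContinuousOnBounded_secondOrderField {N : WithLp 2 (E × E) → E}
    (hN : WeaklyContinuousOnBounded N) : WeaklyContinuousOnBounded (secondOrderField N) := by
  intro U R p q hp hpq z
  have hsnd := hpq (WithLp.toLp 2 (0, z.fst))
  simp only [WithLp.prod_inner_apply, inner_zero_left, zero_add] at hsnd
  exact hsnd.add (hN U R p q hp hpq z.snd)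

variable {ι W V : Type*} [NormedAddCommGroup W] [NormedSpace ℝ W] [FiniteDimensional ℝ W]
  [NormedAddCommGroup V] [InnerProductSpace ℝ V] [FiniteDimensional ℝ V]
  {Φ : ι → W → V} {C : ℝ}

/-- Weak convergence in `ℓ²` is componentwise convergence, and a component of `J p` depends on
finitely many functionals of `p`. -/
lemma weaklyContinuousOnBounded_nemytskii_comp [CompleteSpace E]
    (J : E →L[ℝ] lp (fun _ : ι => W) 2) (hC : 0 ≤ C) (hΦ : ∀ x s, ‖Φ x s‖ ≤ C * ‖s‖)
    (hΦc : ∀ x, Continuous (Φ x)) : WeaklyContinuousOnBounded fun p => nemytskii hΦ (J p) := by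
  have : CompleteSpace V := FiniteDimensional.complete ℝ V
  intro U R p q hp hpq
  have hbound : ∀ n, ‖nemytskii hΦ (J (p n))‖ ≤ C * (‖J‖ * R) := fun n =>
    (norm_nemytskii_le hC hΦ _).trans (by gcongr; exact J.le_opNorm_of_le (hp n))
  refine .of_separating hbound (fun x => lp.evalCLM ℝ (fun _ : ι => V) 2 x)
    (fun v w h => lp.ext (funext h)) fun x => ?_
  exact ((hΦc x).tendsto _).comp (hpq.map (lp.evalCLM ℝ (fun _ : ι => W) 2 x ∘L J))

theorem exists_secondOrder_solution
    (J : WithLp 2 (lp (fun _ : ι => V) 2 × lp (fun _ : ι => V) 2) →L[ℝ] lp (fun _ : ι => W) 2)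
    (hC : 0 ≤ C) (hΦ : ∀ x s, ‖Φ x s‖ ≤ C * ‖s‖) (hΦc : ∀ x, Continuous (Φ x))
    (p₀ : WithLp 2 (lp (fun _ : ι => V) 2 × lp (fun _ : ι => V) 2)) (T : ℝ) :
    ∃ X : ℝ → WithLp 2 (lp (fun _ : ι => V) 2 × lp (fun _ : ι => V) 2), X 0 = p₀ ∧
      ContinuousOn X (Set.Icc 0 T) ∧ ∀ t ∈ Set.Icc 0 T,
        ‖X t‖ ≤ ‖p₀‖ * Real.exp ((1 + C * ‖J‖) * t) ∧
        HasDerivWithinAt (fun t => (X t).fst) (X t).snd (Set.Icc 0 T) t ∧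
        HasDerivWithinAt (fun t => (X t).snd) (nemytskii hΦ (J (X t))) (Set.Icc 0 T) t := by
  have : CompleteSpace V := FiniteDimensional.complete ℝ V
  have hgrowth : ∀ p, ‖nemytskii hΦ (J p)‖ ≤ C * ‖J‖ * ‖p‖ := fun p =>
    (norm_nemytskii_le hC hΦ _).trans (by rw [mul_assoc]; gcongr; exact J.le_opNorm p)
  obtain ⟨X, hX₀, hX⟩ := exists_integralCurve_of_linearGrowth (by positivity)
    (norm_secondOrderField_le hgrowth)
    (continuous_secondOrderField ((continuous_nemytskii hΦ hΦc).comp J.continuous))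
    (weaklyContinuousOnBounded_secondOrderField
      (weaklyContinuousOnBounded_nemytskii_comp J hC hΦ hΦc)) p₀ T
  refine ⟨X, hX₀, fun t ht => (hX t ht).2.continuousWithinAt,
    fun t ht => ⟨(hX t ht).1, ?_, ?_⟩⟩
  · exact (WithLp.fstL 2 ℝ _ _).hasFDerivAt.comp_hasDerivWithinAt t (hX t ht).2
  · exact (WithLp.sndL 2 ℝ _ _).hasFDerivAt.comp_hasDerivWithinAt t (hX t ht).2

end SecondOrder

section Jet

section Assembly

variable {E ι : Type*} [NormedAddCommGroup E] [NormedSpace ℝ E]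

lemma exists_clm_lp_pi {κ : Type*} [Fintype κ] {W : κ → Type*} [∀ i, NormedAddCommGroup (W i)]
    [∀ i, NormedSpace ℝ (W i)] (A : ∀ i, E →L[ℝ] lp (fun _ : ι => W i) 2) :
    ∃ J : E →L[ℝ] lp (fun _ : ι => ∀ i, W i) 2, ∀ p x, J p x = fun i => A i p x := by
  classical
  let T (i : κ) : lp (fun _ : ι => W i) 2 →L[ℝ] lp (fun _ : ι => ∀ i, W i) 2 :=
    lp.mapCLM 2 (fun _ => ContinuousLinearMap.single ℝ W i) (norm_nonneg _) fun _ => le_rfl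
  refine ⟨∑ i, T i ∘L A i, fun p x => ?_⟩
  calc (∑ i, T i ∘L A i) p x = ∑ i, (T i (A i p)) x := by
        rw [sum_apply]
        exact map_sum (lp.evalCLM ℝ (fun _ : ι => ∀ i, W i) 2 x) _ _
    _ = ∑ i, Pi.single i (A i p x) := rfl
    _ = fun i => A i p x := Finset.univ_sum_single _

lemma exists_clm_lp_prod {W₁ W₂ : Type*} [NormedAddCommGroup W₁] [NormedSpace ℝ W₁]
    [NormedAddCommGroup W₂] [NormedSpace ℝ W₂] (A₁ : E →L[ℝ] lp (fun _ : ι => W₁) 2)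
    (A₂ : E →L[ℝ] lp (fun _ : ι => W₂) 2) :
    ∃ J : E →L[ℝ] lp (fun _ : ι => W₁ × W₂) 2, ∀ p x, J p x = (A₁ p x, A₂ p x) := by
  let T₁ : lp (fun _ : ι => W₁) 2 →L[ℝ] lp (fun _ : ι => W₁ × W₂) 2 :=
    lp.mapCLM 2 (fun _ => ContinuousLinearMap.inl ℝ W₁ W₂) (norm_nonneg _) fun _ => le_rfl
  let T₂ : lp (fun _ : ι => W₂) 2 →L[ℝ] lp (fun _ : ι => W₁ × W₂) 2 :=
    lp.mapCLM 2 (fun _ => ContinuousLinearMap.inr ℝ W₁ W₂) (norm_nonneg _) fun _ => le_rfl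
  exact ⟨T₁ ∘L A₁ + T₂ ∘L A₂, fun p x => by simp [T₁, T₂]⟩

end Assembly

variable {d : ℕ}

/-- Cauchy data in `ℓ²`: the pair `(u, ∂ₜu)` at one time, after removal of the weights. -/
abbrev CauchyData (d : ℕ) := WithLp 2 (L2 d × L2 d)

/-- The values that `(u, u')` can take at a point. -/
abbrev StateSpace (d : ℕ) := ℂ × (Fin (d + 1) → ℂ)

/-- The values that `((u, u'), (∂ⱼ∂ₗu)ⱼₗ)` can take at a point. -/
abbrev JetSpace (d : ℕ) := StateSpace d × (Fin d → Fin d → ℂ)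

/-- The pointwise data `((u, u'), (∂ⱼ∂ₗu)ⱼₗ)` entering the wave equation, where `v = ∂ₜu`. -/
def jet (u v : (Fin d → ℤ) → ℂ) (x : Fin d → ℤ) : JetSpace d :=
  ((u x, Fin.cons (v x) fun i => pd i u x), fun j l => pd j (pd l u) x)

theorem exists_clm_weight_smul_jet {k : ℕ} (hk : k ≤ 1) :
    ∃ J : CauchyData d →L[ℝ] lp (fun _ : Fin d → ℤ => JetSpace d) 2,
      ∀ p x, J p x = weight k x • jet (unwt k p.fst) (unwt k p.snd) x := by
  choose D hD using fun j : Fin d => exists_clm_unwt_eq_pd hk j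
  let D' : Fin d → L2 d →L[ℝ] L2 d := fun j => (D j).restrictScalars ℝ
  let fst : CauchyData d →L[ℝ] L2 d := WithLp.fstL 2 ℝ _ _
  let snd : CauchyData d →L[ℝ] L2 d := WithLp.sndL 2 ℝ _ _
  obtain ⟨J₁, hJ₁⟩ := exists_clm_lp_pi (W := fun _ => ℂ)
    (Fin.cons snd fun i => D' i ∘L fst : Fin (d + 1) → CauchyData d →L[ℝ] L2 d)
  choose Q hQ using fun j => exists_clm_lp_pi (W := fun _ => ℂ) fun l => D' j ∘L D' l ∘L fst
  obtain ⟨J₂, hJ₂⟩ := exists_clm_lp_pi Q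
  obtain ⟨J₀, hJ₀⟩ := exists_clm_lp_prod fst J₁
  obtain ⟨J, hJ⟩ := exists_clm_lp_prod J₀ J₂
  have hweight : ∀ (U : L2 d) x, weight k x * unwt k U x = U x := fun U x =>
    mul_inv_cancel_left₀ (weight_ne_zero k x) (U x)
  refine ⟨J, fun p x => ?_⟩
  rw [hJ, hJ₀, hJ₁, hJ₂]
  refine Prod.ext (Prod.ext ?_ (funext fun i => ?_)) (funext fun j => funext fun l => ?_)
  · exact (hweight _ x).symm
  · refine Fin.cases ?_ (fun i => ?_) i
    · exact (hweight _ x).symm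
    · simp [jet, hD, hweight, D', fst]
  · simp [jet, hD, hweight, hQ, D', fst]

end Jet

section WaveEquation

variable {d k : ℕ} {gc : Fin d → Fin d → StateSpace d → ℝ} {F : StateSpace d → ℂ}

/-- The nonlinearity `∑ g^{jl}(s) hⱼₗ + F(s)` of the wave equation as a function of the jet
`(s, h)`. -/
def waveRHS (gc : Fin d → Fin d → StateSpace d → ℝ) (F : StateSpace d → ℂ) (q : JetSpace d) : ℂ :=
  ∑ j, ∑ l, (gc j l q.1 : ℂ) * q.2 j l + F q.1

/-- The nonlinearity at `x` in terms of jets multiplied by the weight `⟨x⟩^k`. -/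
def weightedWaveRHS (k : ℕ) (gc : Fin d → Fin d → StateSpace d → ℝ) (F : StateSpace d → ℂ)
    (x : Fin d → ℤ) (q : JetSpace d) : ℂ :=
  weight k x * waveRHS gc F ((weight k x)⁻¹ • q)

lemma continuous_weightedWaveRHS (hgc : ∀ j l, Continuous (gc j l)) (hF : Continuous F)
    (x : Fin d → ℤ) : Continuous (weightedWaveRHS k gc F x) := by
  unfold weightedWaveRHS waveRHS
  fun_prop

lemma norm_waveRHS_le {M L : ℝ} (hM : ∀ j l s, |gc j l s| ≤ M) (hL : ∀ s, ‖F s‖ ≤ L * ‖s‖)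
    (hL0 : 0 ≤ L) (q : JetSpace d) : ‖waveRHS gc F q‖ ≤ (d ^ 2 * M + L) * ‖q‖ := by
  have hterm : ∀ j l, ‖(gc j l q.1 : ℂ) * q.2 j l‖ ≤ M * ‖q‖ := fun j l => by
    rw [norm_mul, Complex.norm_real, Real.norm_eq_abs]
    gcongr
    · exact (abs_nonneg _).trans (hM j l q.1)
    · exact hM j l q.1
    · exact (norm_le_pi_norm (q.2 j) l).trans ((norm_le_pi_norm q.2 j).trans (norm_snd_le q))
  calc ‖waveRHS gc F q‖
      ≤ ∑ j, ∑ l, ‖(gc j l q.1 : ℂ) * q.2 j l‖ + ‖F q.1‖ :=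
        (norm_add_le _ _).trans (add_le_add_left (norm_sum_le_of_le _ fun j _ =>
          norm_sum_le _ _) _)
    _ ≤ ∑ _j : Fin d, ∑ _l : Fin d, M * ‖q‖ + L * ‖q‖ := by
        gcongr with j _ l
        · exact hterm j l
        · exact (hL q.1).trans (by gcongr; exact norm_fst_le q)
    _ = (d ^ 2 * M + L) * ‖q‖ := by
        simp only [Finset.sum_const, Finset.card_univ, Fintype.card_fin, nsmul_eq_mul]
        ring

lemma norm_weightedWaveRHS_le {B : ℝ} (hB : ∀ q, ‖waveRHS gc F q‖ ≤ B * ‖q‖) (x : Fin d → ℤ)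
    (q : JetSpace d) : ‖weightedWaveRHS k gc F x q‖ ≤ B * ‖q‖ := by
  have hw : 0 < ‖weight k x‖ := norm_pos_iff.2 (weight_ne_zero k x)
  calc ‖weightedWaveRHS k gc F x q‖ ≤ ‖weight k x‖ * (B * ‖(weight k x)⁻¹ • q‖) := by
        rw [weightedWaveRHS, norm_mul]
        gcongr
        exact hB _
    _ = B * ‖q‖ := by
        rw [norm_smul, norm_inv]
        field_simp

lemma norm_state_le {J : CauchyData d →L[ℝ] lp (fun _ : Fin d → ℤ => JetSpace d) 2}
    (hJ : ∀ p x, J p x = weight k x • jet (unwt k p.fst) (unwt k p.snd) x)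
    (X : ℝ → CauchyData d) (t : ℝ) (x : Fin d → ℤ) :
    ‖state (fun t => unwt k (X t).fst) (fun t => unwt k (X t).snd) t x‖ ≤ ‖J‖ * ‖X t‖ := by
  have hweight : 1 ≤ ‖weight k x‖ := by
    rw [norm_weight]
    exact one_le_pow₀ (one_le_jap x)
  calc ‖state (fun t => unwt k (X t).fst) (fun t => unwt k (X t).snd) t x‖
      ≤ ‖jet (unwt k (X t).fst) (unwt k (X t).snd) x‖ := norm_fst_le (jet _ _ x)
    _ ≤ ‖weight k x • jet (unwt k (X t).fst) (unwt k (X t).snd) x‖ := by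
        rw [norm_smul]
        exact le_mul_of_one_le_left (norm_nonneg _) hweight
    _ = ‖J (X t) x‖ := by rw [hJ]
    _ ≤ ‖J (X t)‖ := lp.norm_apply_le_norm two_ne_zero _ x
    _ ≤ ‖J‖ * ‖X t‖ := J.le_opNorm _

theorem exists_qlsol_of_linearGrowth
    {J : CauchyData d →L[ℝ] lp (fun _ : Fin d → ℤ => JetSpace d) 2}
    (hJ : ∀ p x, J p x = weight k x • jet (unwt k p.fst) (unwt k p.snd) x)
    (hgc : ∀ j l, Continuous (gc j l)) (hF : Continuous F) {B : ℝ} (hB0 : 0 ≤ B)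
    (hB : ∀ q, ‖waveRHS gc F q‖ ≤ B * ‖q‖) (p₀ : CauchyData d) (T : ℝ) :
    ∃ u u1 u2, QLSol d k gc F (unwt k p₀.fst) (unwt k p₀.snd) (Set.Icc 0 T) u u1 u2 ∧
      ∀ t ∈ Set.Icc 0 T, ∀ x,
        ‖state u u1 t x‖ ≤ ‖J‖ * (‖p₀‖ * Real.exp ((1 + B * ‖J‖) * t)) := by
  have hΦ : ∀ x q, ‖weightedWaveRHS k gc F x q‖ ≤ B * ‖q‖ := norm_weightedWaveRHS_le hB
  have hΦc : ∀ x, Continuous (weightedWaveRHS k gc F x) := continuous_weightedWaveRHS hgc hF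
  obtain ⟨X, hX₀, hXc, hX⟩ := exists_secondOrder_solution J hB0 hΦ hΦc p₀ T
  have hjet : ∀ p x, jet (unwt k p.fst) (unwt k p.snd) x = (weight k x)⁻¹ • J p x := fun p x => by
    rw [hJ, inv_smul_smul₀ (weight_ne_zero k x)]
  refine ⟨fun t => unwt k (X t).fst, fun t => unwt k (X t).snd,
    fun t => unwt k (nemytskii hΦ (J (X t))), ⟨isC2_unwt k (fun t ht => (hX t ht).2.1)
      (fun t ht => (hX t ht).2.2) ?_, fun t _ x => ?_, fun x => ?_, fun x => ?_⟩, fun t ht x => ?_⟩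
  · exact (continuous_nemytskii hΦ hΦc).comp_continuousOn (J.continuous.comp_continuousOn hXc)
  · have hrhs : unwt k (nemytskii hΦ (J (X t))) x =
        waveRHS gc F (jet (unwt k (X t).fst) (unwt k (X t).snd) x) := by
      rw [hjet]
      exact inv_mul_cancel_left₀ (weight_ne_zero k x) _
    exact sub_eq_iff_eq_add'.2 hrhs
  · simp only [hX₀]
  · simp only [hX₀]
  · exact (norm_state_le hJ X t x).trans (by gcongr; exact (hX t ht).1)

end WaveEquation

section Cutoff

variable {E V : Type*} [NormedAddCommGroup E] [NormedSpace ℝ E] [NormedAddCommGroup V] {R : ℝ}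

/-- The retraction of a normed space onto its closed ball of radius `R > 0`, used to truncate the
coefficients of the equation. -/
def radialRetraction (R : ℝ) (s : E) : E := (R / max R ‖s‖) • s

lemma continuous_radialRetraction (hR : 0 < R) : Continuous (radialRetraction R : E → E) := by
  have hne : ∀ s : E, max R ‖s‖ ≠ 0 := fun s => (lt_max_of_lt_left hR).ne'
  unfold radialRetraction
  fun_prop (disch := exact hne)

lemma radialRetraction_of_norm_le (hR : 0 < R) {s : E} (hs : ‖s‖ ≤ R) :
    radialRetraction R s = s := by
  rw [radialRetraction, max_eq_left hs, div_self hR.ne', one_smul]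

lemma norm_radialRetraction (hR : 0 < R) (s : E) :
    ‖radialRetraction R s‖ = R * ‖s‖ / max R ‖s‖ := by
  rw [radialRetraction, norm_smul, Real.norm_of_nonneg (by positivity), div_mul_eq_mul_div]

lemma norm_radialRetraction_le_radius (hR : 0 < R) (s : E) : ‖radialRetraction R s‖ ≤ R := by
  rw [norm_radialRetraction hR, div_le_iff₀ (lt_max_of_lt_left hR)]
  gcongr
  exact le_max_right _ _

lemma norm_radialRetraction_le_norm (hR : 0 < R) (s : E) : ‖radialRetraction R s‖ ≤ ‖s‖ := by
  rw [norm_radialRetraction hR, div_le_iff₀ (lt_max_of_lt_left hR), mul_comm]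
  gcongr
  exact le_max_left _ _

variable [ProperSpace E]

lemma exists_norm_comp_radialRetraction_le {ι : Type*} [Finite ι] {G : ι → E → V}
    (hG : ∀ i, Continuous (G i)) (hR : 0 < R) :
    ∃ M, 0 ≤ M ∧ ∀ i s, ‖G i (radialRetraction R s)‖ ≤ M := by
  choose M hM using fun i =>
    (isCompact_closedBall (0 : E) R).exists_bound_of_continuousOn (hG i).continuousOn
  obtain ⟨B, hB⟩ := Finite.exists_le M
  exact ⟨max B 0, le_max_right _ _, fun i s => (hM i _ (mem_closedBall_zero_iff.2
    (norm_radialRetraction_le_radius hR s))).trans ((hB i).trans (le_max_left _ _))⟩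

lemma exists_norm_comp_radialRetraction_le_mul_norm {G : E → V} (hG : Continuous G)
    (hG₀ : G =O[𝓝 0] fun s => s) (hR : 0 < R) :
    ∃ L, 0 ≤ L ∧ ∀ s, ‖G (radialRetraction R s)‖ ≤ L * ‖s‖ := by
  obtain ⟨c, hc⟩ := hG₀.bound
  obtain ⟨r, hr, hball⟩ := Metric.eventually_nhds_iff_ball.1 hc
  obtain ⟨B, hB⟩ := (isCompact_closedBall (0 : E) R).exists_bound_of_continuousOn hG.continuousOn
  have hnear : ∀ s, ‖s‖ < r → ‖G s‖ ≤ max c (B / r) * ‖s‖ := fun s hs =>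
    (hball s (mem_ball_zero_iff.2 hs)).trans (by gcongr; exact le_max_left _ _)
  have hB0 : 0 ≤ B := (norm_nonneg _).trans (hB 0 (Metric.mem_closedBall_self hR.le))
  have hfar : ∀ s, r ≤ ‖s‖ → ‖s‖ ≤ R → ‖G s‖ ≤ max c (B / r) * ‖s‖ := fun s hs hsR =>
    calc ‖G s‖ ≤ B / r * r := by
          rw [div_mul_cancel₀ _ hr.ne']
          exact hB s (mem_closedBall_zero_iff.2 hsR)
      _ ≤ max c (B / r) * ‖s‖ := by gcongr; exact le_max_right _ _
  have hL : 0 ≤ max c (B / r) := le_max_of_le_right (by positivity)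
  refine ⟨max c (B / r), hL, fun s => ?_⟩
  refine le_trans ?_ (mul_le_mul_of_nonneg_left (norm_radialRetraction_le_norm hR s) hL)
  rcases lt_or_ge ‖radialRetraction R s‖ r with hs | hs
  · exact hnear _ hs
  · exact hfar _ hs (norm_radialRetraction_le_radius hR s)

end Cutoff

section SmallData

variable {d k : ℕ} {gc : Fin d → Fin d → StateSpace d → ℝ} {F : StateSpace d → ℂ}

lemma QLSol.congr_of_state {gc' : Fin d → Fin d → StateSpace d → ℝ} {F' : StateSpace d → ℂ}
    {f g : (Fin d → ℤ) → ℂ} {S : Set ℝ} {u u1 u2 : ℝ → (Fin d → ℤ) → ℂ}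
    (h : QLSol d k gc F f g S u u1 u2)
    (hgc : ∀ j l, ∀ t ∈ S, ∀ x, gc j l (state u u1 t x) = gc' j l (state u u1 t x))
    (hF : ∀ t ∈ S, ∀ x, F (state u u1 t x) = F' (state u u1 t x)) :
    QLSol d k gc' F' f g S u u1 u2 := by
  refine ⟨h.1, fun t ht x => ?_, h.2.2⟩
  simpa only [hgc _ _ t ht x, hF t ht x] using h.2.1 t ht x

/-- Truncation outside a ball turns the equation into one of linear growth; its solution solves the
original equation for as long as its states stay in the ball. -/
theorem exists_qlsol_of_mul_exp_le (hk : k ≤ 1) (hgc : ∀ j l, Continuous (gc j l))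
    (hF : Continuous F) (hF₀ : F =O[𝓝 0] fun s => s) :
    ∃ A, 0 ≤ A ∧ ∀ R, 0 < R → ∃ C, 0 < C ∧ ∀ (p : CauchyData d) (T : ℝ),
      A * ‖p‖ * Real.exp (C * T) ≤ R →
        ∃ u u1 u2, QLSol d k gc F (unwt k p.fst) (unwt k p.snd) (Set.Icc 0 T) u u1 u2 := by
  obtain ⟨J, hJ⟩ := exists_clm_weight_smul_jet (d := d) hk
  refine ⟨‖J‖, norm_nonneg _, fun R hR => ?_⟩
  have hρ : Continuous (radialRetraction R : StateSpace d → StateSpace d) :=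
    continuous_radialRetraction hR
  obtain ⟨M, hM0, hM⟩ := exists_norm_comp_radialRetraction_le
    (G := fun i : Fin d × Fin d => gc i.1 i.2) (fun i => hgc i.1 i.2) hR
  obtain ⟨L, hL0, hL⟩ := exists_norm_comp_radialRetraction_le_mul_norm hF hF₀ hR
  have hgrowth := norm_waveRHS_le (gc := fun j l s => gc j l (radialRetraction R s))
    (F := fun s => F (radialRetraction R s)) (fun j l => hM (j, l)) hL hL0
  have hB0 : 0 ≤ d ^ 2 * M + L := by positivity
  refine ⟨1 + (d ^ 2 * M + L) * ‖J‖, by positivity, fun p T hT => ?_⟩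
  obtain ⟨u, u1, u2, hsol, hstate⟩ := exists_qlsol_of_linearGrowth hJ
    (fun j l => (hgc j l).comp hρ) (hF.comp hρ) hB0 hgrowth p T
  have hmem : ∀ t ∈ Set.Icc 0 T, ∀ x,
      radialRetraction R (state u u1 t x) = state u u1 t x := fun t ht x => by
    refine radialRetraction_of_norm_le hR ((hstate t ht x).trans (le_trans ?_ hT))
    rw [mul_assoc]
    gcongr
    exact ht.2
  exact ⟨u, u1, u2, hsol.congr_of_state (fun j l t ht x => congrArg (gc j l) (hmem t ht x))
    fun t ht x => congrArg F (hmem t ht x)⟩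

end SmallData

theorem stmt13_general {d k : ℕ} (hk : k ≤ 1) {gc : Fin d → Fin d → StateSpace d → ℝ}
    (hgc : ∀ j l, Continuous (gc j l)) {F : StateSpace d → ℂ} (hF : Continuous F)
    (hF₀ : F =O[𝓝 0] fun s => s) {f g : (Fin d → ℤ) → ℂ} (hf : w2 k f < ⊤) (hg : w2 k g < ⊤) :
    ∃ K : ℝ, 0 < K ∧ ∀ ε : ℝ, 0 < ε → ∀ T : ℝ, T ≤ K * Real.log (1 / ε) →
      ∃ u u1 u2, QLSol d k gc F (fun m => (ε : ℂ) * f m) (fun m => (ε : ℂ) * g m)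
        (Set.Icc 0 T) u u1 u2 := by
  obtain ⟨U, rfl⟩ := exists_unwt_eq k hf
  obtain ⟨V, rfl⟩ := exists_unwt_eq k hg
  let p : CauchyData d := WithLp.toLp 2 (U, V)
  obtain ⟨A, hA, hball⟩ := exists_qlsol_of_mul_exp_le hk hgc hF hF₀
  obtain ⟨C, hC, hsol⟩ := hball (A * ‖p‖ + 1) (by positivity)
  refine ⟨C⁻¹, inv_pos.2 hC, fun ε hε T hT => ?_⟩
  have hCT : ε * Real.exp (C * T) ≤ 1 := by
    rw [mul_comm, ← le_div_iff₀ hε, ← Real.le_log_iff_exp_le (by positivity)]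
    exact (le_inv_mul_iff₀ hC).1 hT
  have hsmall : A * ‖ε • p‖ * Real.exp (C * T) ≤ A * ‖p‖ + 1 :=
    calc A * ‖ε • p‖ * Real.exp (C * T) = A * ‖p‖ * (ε * Real.exp (C * T)) := by
          rw [norm_smul, Real.norm_of_nonneg hε.le]
          ring
      _ ≤ A * ‖p‖ * 1 := by gcongr
      _ ≤ A * ‖p‖ + 1 := by linarith
  have hdata : ∀ W : L2 d, unwt k (ε • W) = fun m => (ε : ℂ) * unwt k W m := unwt_smul k ε
  simpa only [p, WithLp.smul_fst, WithLp.smul_snd, WithLp.toLp_fst, WithLp.toLp_snd, hdata]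
    using hsol (ε • p) T hsmall

/-- long-time existence for the quasilinear discrete wave equation with
small data `εf, εg`: for all small `ε > 0` the maximal existence time satisfies
`T*(ε) ≥ K·log(log(1/ε))`, i.e. a classical solution exists on `[0,T]` for every
`T < K·log(log(1/ε))`. -/
theorem stmt13 (d : ℕ) (hd : 0 < d) (k : ℕ) (hk : k = 0 ∨ k = 1)
    (gc : Fin d → Fin d → ℂ × (Fin (d + 1) → ℂ) → ℝ)
    (hgc : ∀ j l, Continuous (gc j l))
    (F : ℂ × (Fin (d + 1) → ℂ) → ℂ) (hF : ContDiff ℝ 1 F) (hF0 : F (0, 0) = 0)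
    (f g : (Fin d → ℤ) → ℂ) (hf : w2 k f < ⊤) (hg : w2 k g < ⊤) :
    ∃ δ : ℝ, 0 < δ ∧ ∃ K : ℝ, 0 < K ∧
      ∀ ε : ℝ, 0 < ε → ε < δ →
        ∀ T : ℝ, 0 < T → T < K * Real.log (Real.log (1 / ε)) →
          ∃ u u1 u2,
            QLSol d k gc F (fun m => (ε : ℂ) * f m) (fun m => (ε : ℂ) * g m)
              (Set.Icc 0 T) u u1 u2 := by
  have hF₀ : F =O[𝓝 0] fun s => s := by
    simpa [show F 0 = 0 from hF0] using (hF.differentiable one_ne_zero 0).isBigO_sub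
  obtain ⟨K, hK, hsol⟩ := stmt13_general (by lia) hgc hF.continuous hF₀ hf hg
  refine ⟨1, one_pos, K, hK, fun ε hε hε1 T _ hT => hsol ε hε T (hT.le.trans ?_)⟩
  have hlog : 0 ≤ Real.log (1 / ε) := Real.log_nonneg (one_le_one_div hε hε1.le)
  exact mul_le_mul_of_nonneg_left (Real.log_le_self hlog) hK.le
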